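/- Let n ≥ 2 and let φ : ℝⁿ∖{0} → ℝⁿ be the inversion in the unit sphere, φ(x) = x/|x|². Then φ is a Euclidean biharmonic morphism if and only if n = 4. -/

import Mathlib

/-!
Write `s = |y|²`, `R u = Σ yᵢ ∂ᵢu` (the Euler operator) and `φ` for the inversion. Since `φ` is
conformal, with `Σᵢ ∂ᵢφₖ ∂ᵢφⱼ = |x|⁻⁴ δₖⱼ` and `Δφⱼ = -2 (n - 2) |x|⁻² φⱼ`, the chain rule gives
`Δ(u ∘ φ) = (L u) ∘ φ` with `L u = s² Δu - 2 (n - 2) s R u` (`lap_comp_inv`). Hence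
`Δ²(u ∘ φ) = (L (L u)) ∘ φ`, and the product rule for `Δ` together with `Δ R = R Δ + 2 Δ`
(`lap_euler`) yields (`invOp_invOp`)

`L (L u) = s⁴ Δ²u - 4 (n - 4) (s³ R Δu + 2 s³ Δu - (n - 2) s² (R R u + R u))`.

For `n = 4` only the term `s⁴ Δ²u` survives, so `φ` preserves biharmonicity. Conversely, the
biharmonic polynomial `u = |y|² + y₁` has `L (L u) = 16 (n - 4)²` at the first unit vector, which
is a fixed point of `φ`; so `n = 4` is forced.
-/

open scoped RealInnerProductSpace

noncomputable section

abbrev E (n : ℕ) := EuclideanSpace ℝ (Fin n)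

/-- Partial derivative in the `i`-th coordinate direction. -/
def pd {m : ℕ} (u : E m → ℝ) (i : Fin m) : E m → ℝ :=
  fun x => fderiv ℝ u x (EuclideanSpace.single i 1)

/-- Euclidean Laplacian `Δu = Σᵢ ∂²u/∂xᵢ²`. -/
def lap {m : ℕ} (u : E m → ℝ) : E m → ℝ :=
  fun x => ∑ i, pd (pd u i) i x

/-- `φ : U → ℝⁿ` is a Euclidean biharmonic morphism if for every open `V ⊆ ℝⁿ` and every
smooth biharmonic `f : V → ℝ`, the composition `f ∘ φ` is biharmonic on `U ∩ φ⁻¹(V)`. -/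
def IsBiharmonicMorphism {m n : ℕ} (U : Set (E m)) (φ : E m → E n) : Prop :=
  ∀ V : Set (E n), IsOpen V → ∀ f : E n → ℝ, ContDiffOn ℝ (⊤ : ℕ∞) f V →
    (∀ y ∈ V, lap (lap f) y = 0) →
    ∀ x ∈ U ∩ φ ⁻¹' V, lap (lap (f ∘ φ)) x = 0

/-! ### Calculus with partial derivatives, the Laplacian and the Euler operator -/

section Calculus

variable {n : ℕ} {V : Set (E n)} {u v : E n → ℝ}

lemma smooth_diff (hV : IsOpen V) (hu : ContDiffOn ℝ (⊤ : ℕ∞) u V)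
    {x : E n} (hx : x ∈ V) :
    DifferentiableAt ℝ u x :=
  (hu.contDiffAt (hV.mem_nhds hx)).differentiableAt (by simp)

lemma smooth_pd (hV : IsOpen V) (hu : ContDiffOn ℝ (⊤ : ℕ∞) u V) (i : Fin n) :
    ContDiffOn ℝ (⊤ : ℕ∞) (pd u i) V :=
  (hu.fderiv_of_isOpen (m := (⊤ : ℕ∞)) hV (by simp)).clm_apply contDiffOn_const

lemma smooth_lap (hV : IsOpen V) (hu : ContDiffOn ℝ (⊤ : ℕ∞) u V) :
    ContDiffOn ℝ (⊤ : ℕ∞) (lap u) V :=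
  ContDiffOn.sum fun i _ => smooth_pd hV (smooth_pd hV hu i) i

lemma smooth_coord (i : Fin n) : ContDiff ℝ (⊤ : ℕ∞) (fun y : E n => y i) :=
  (EuclideanSpace.proj (𝕜 := ℝ) i).contDiff

lemma pd_congr (hV : IsOpen V) (h : Set.EqOn u v V) (i : Fin n) :
    Set.EqOn (pd u i) (pd v i) V := fun x hx => by
  have : u =ᶠ[nhds x] v := Filter.eventuallyEq_of_mem (hV.mem_nhds hx) h
  simp only [pd, this.fderiv_eq]

lemma lap_congr (hV : IsOpen V) (h : Set.EqOn u v V) : Set.EqOn (lap u) (lap v) V :=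
  fun x hx => Finset.sum_congr rfl fun i _ => pd_congr hV (pd_congr hV h i) i hx

lemma pd_add (hV : IsOpen V) (hu : ContDiffOn ℝ (⊤ : ℕ∞) u V)
    (hv : ContDiffOn ℝ (⊤ : ℕ∞) v V) (i : Fin n) :
    Set.EqOn (pd (fun y => u y + v y) i) (fun y => pd u i y + pd v i y) V := fun x hx => by
  simp only [pd]
  rw [fderiv_fun_add (smooth_diff hV hu hx) (smooth_diff hV hv hx)]
  rfl

lemma pd_mul (hV : IsOpen V) (hu : ContDiffOn ℝ (⊤ : ℕ∞) u V)
    (hv : ContDiffOn ℝ (⊤ : ℕ∞) v V) (i : Fin n) :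
    Set.EqOn (pd (fun y => u y * v y) i) (fun y => pd u i y * v y + u y * pd v i y) V :=
  fun x hx => by
  simp only [pd]
  rw [fderiv_fun_mul (smooth_diff hV hu hx) (smooth_diff hV hv hx)]
  simp
  ring

lemma pd_sum {ι : Type*} (s : Finset ι) {f : ι → E n → ℝ} (hV : IsOpen V)
    (hf : ∀ j, ContDiffOn ℝ (⊤ : ℕ∞) (f j) V) (i : Fin n) :
    Set.EqOn (pd (fun y => ∑ j ∈ s, f j y) i) (fun y => ∑ j ∈ s, pd (f j) i y) V :=
  fun x hx => by
  simp only [pd]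
  rw [fderiv_fun_sum fun j _ => smooth_diff hV (hf j) hx]
  simp

lemma pd_const (c : ℝ) (i : Fin n) : pd (fun _ : E n => c) i = fun _ => 0 := by
  funext x; simp [pd]

lemma pd_coord (i j : Fin n) : pd (fun y : E n => y j) i = fun _ => if j = i then 1 else 0 := by
  funext x
  have : HasFDerivAt (fun y : E n => y j) (EuclideanSpace.proj (𝕜 := ℝ) j) x :=
    (EuclideanSpace.proj (𝕜 := ℝ) j).hasFDerivAt
  simp [pd, this.fderiv]

lemma fderiv_eq_sum_pd (u : E n → ℝ) (x w : E n) : fderiv ℝ u x w = ∑ j, pd u j x * w j := by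
  have hw : w = ∑ j, w j • EuclideanSpace.single j (1 : ℝ) := by
    ext k; simp [Pi.single_apply]
  conv_lhs => rw [hw]
  simp [pd, mul_comm]

lemma pd_comm (hV : IsOpen V) (hu : ContDiffOn ℝ (⊤ : ℕ∞) u V) (i j : Fin n) :
    Set.EqOn (pd (pd u i) j) (pd (pd u j) i) V := fun x hx => by
  have hs : IsSymmSndFDerivAt ℝ u x :=
    (hu.contDiffAt (hV.mem_nhds hx)).isSymmSndFDerivAt
      (by simp only [minSmoothness_of_isRCLikeNormedField]; exact WithTop.coe_le_coe.2 (le_top : (2 : ℕ∞) ≤ ⊤))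
  have hd : DifferentiableAt ℝ (fderiv ℝ u) x :=
    ((hu.fderiv_of_isOpen (m := (⊤ : ℕ∞)) hV (by simp)).contDiffAt
      (hV.mem_nhds hx)).differentiableAt (by simp)
  have key (a b : E n) : fderiv ℝ (fun y => fderiv ℝ u y a) x b = fderiv ℝ (fderiv ℝ u) x b a := by
    rw [fderiv_clm_apply hd (differentiableAt_const a)]
    simp
  change fderiv ℝ (fun y => fderiv ℝ u y _) x _ = fderiv ℝ (fun y => fderiv ℝ u y _) x _
  rw [key, key]
  exact hs _ _

lemma lap_add (hV : IsOpen V) (hu : ContDiffOn ℝ (⊤ : ℕ∞) u V)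
    (hv : ContDiffOn ℝ (⊤ : ℕ∞) v V) :
    Set.EqOn (lap (fun y => u y + v y)) (fun y => lap u y + lap v y) V := fun x hx => by
  simp only [lap, ← Finset.sum_add_distrib]
  refine Finset.sum_congr rfl fun i _ => ?_
  rw [pd_congr hV (pd_add hV hu hv i) i hx,
    pd_add hV (smooth_pd hV hu i) (smooth_pd hV hv i) i hx]

lemma lap_mul (hV : IsOpen V) (hu : ContDiffOn ℝ (⊤ : ℕ∞) u V)
    (hv : ContDiffOn ℝ (⊤ : ℕ∞) v V) :
    Set.EqOn (lap (fun y => u y * v y))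
      (fun y => lap u y * v y + u y * lap v y + 2 * ∑ i, pd u i y * pd v i y) V := fun x hx => by
  simp only [lap, Finset.sum_mul, Finset.mul_sum, ← Finset.sum_add_distrib]
  refine Finset.sum_congr rfl fun i _ => ?_
  have hui := smooth_pd hV hu i
  have hvi := smooth_pd hV hv i
  rw [pd_congr hV (pd_mul hV hu hv i) i hx, pd_add hV (hui.mul hv) (hu.mul hvi) i hx]
  simp only []
  rw [pd_mul hV hui hv i hx, pd_mul hV hu hvi i hx]
  ring

lemma lap_const (c : ℝ) : lap (fun _ : E n => c) = fun _ => 0 := by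
  funext x; simp [lap, pd_const]

lemma lap_const_mul (hV : IsOpen V) (hu : ContDiffOn ℝ (⊤ : ℕ∞) u V) (c : ℝ) :
    Set.EqOn (lap (fun y => c * u y)) (fun y => c * lap u y) V := fun x hx => by
  rw [lap_mul hV contDiffOn_const hu hx]
  simp [lap_const, pd_const]

lemma lap_coord (j : Fin n) : lap (fun y : E n => y j) = fun _ => 0 := by
  funext x; simp [lap, pd_coord, pd_const]

/-- The Euler operator `R u = Σᵢ yᵢ ∂ᵢu`. -/
def euler (u : E n → ℝ) : E n → ℝ := fun y => ∑ i, y i * pd u i y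

lemma smooth_euler (hV : IsOpen V) (hu : ContDiffOn ℝ (⊤ : ℕ∞) u V) :
    ContDiffOn ℝ (⊤ : ℕ∞) (euler u) V :=
  ContDiffOn.sum fun i _ => (smooth_coord i).contDiffOn.mul (smooth_pd hV hu i)

lemma euler_congr (hV : IsOpen V) (h : Set.EqOn u v V) : Set.EqOn (euler u) (euler v) V :=
  fun x hx => Finset.sum_congr rfl fun i _ => by rw [pd_congr hV h i hx]

lemma euler_add (hV : IsOpen V) (hu : ContDiffOn ℝ (⊤ : ℕ∞) u V)
    (hv : ContDiffOn ℝ (⊤ : ℕ∞) v V) :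
    Set.EqOn (euler (fun y => u y + v y)) (fun y => euler u y + euler v y) V := fun x hx => by
  simp only [euler, ← Finset.sum_add_distrib]
  refine Finset.sum_congr rfl fun i _ => ?_
  rw [pd_add hV hu hv i hx]
  ring

lemma euler_mul (hV : IsOpen V) (hu : ContDiffOn ℝ (⊤ : ℕ∞) u V)
    (hv : ContDiffOn ℝ (⊤ : ℕ∞) v V) :
    Set.EqOn (euler (fun y => u y * v y)) (fun y => euler u y * v y + u y * euler v y) V :=
  fun x hx => by
  simp only [euler, Finset.sum_mul, Finset.mul_sum, ← Finset.sum_add_distrib]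
  refine Finset.sum_congr rfl fun i _ => ?_
  rw [pd_mul hV hu hv i hx]
  ring

lemma euler_const (c : ℝ) : euler (fun _ : E n => c) = fun _ => 0 := by
  funext x; simp [euler, pd_const]

lemma euler_const_mul (hV : IsOpen V) (hu : ContDiffOn ℝ (⊤ : ℕ∞) u V) (c : ℝ) :
    Set.EqOn (euler (fun y => c * u y)) (fun y => c * euler u y) V := fun x hx => by
  rw [euler_mul hV contDiffOn_const hu hx]
  simp [euler_const]

lemma euler_coord (j : Fin n) : euler (fun y : E n => y j) = fun y => y j := by
  funext x; simp [euler, pd_coord]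

lemma lap_sum {ι : Type*} (s : Finset ι) {f : ι → E n → ℝ} (hV : IsOpen V)
    (hf : ∀ j, ContDiffOn ℝ (⊤ : ℕ∞) (f j) V) :
    Set.EqOn (lap (fun y => ∑ j ∈ s, f j y)) (fun y => ∑ j ∈ s, lap (f j) y) V := fun x hx => by
  simp only [lap]
  rw [Finset.sum_comm]
  refine Finset.sum_congr rfl fun i _ => ?_
  rw [pd_congr hV (pd_sum s hV hf i) i hx, pd_sum s hV (fun j => smooth_pd hV (hf j) i) i hx]

lemma lap_pd (hV : IsOpen V) (hu : ContDiffOn ℝ (⊤ : ℕ∞) u V) (j : Fin n) :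
    Set.EqOn (lap (pd u j)) (pd (lap u) j) V := fun x hx => by
  change _ = pd (fun y => ∑ i, pd (pd u i) i y) j x
  rw [pd_sum _ hV (fun i => smooth_pd hV (smooth_pd hV hu i) i) j hx]
  refine Finset.sum_congr rfl fun i _ => ?_
  rw [pd_congr hV (pd_comm hV hu j i) i hx, pd_comm hV (smooth_pd hV hu i) j i hx]

/-- The commutation relation `Δ R = R Δ + 2 Δ`. -/
lemma lap_euler (hV : IsOpen V) (hu : ContDiffOn ℝ (⊤ : ℕ∞) u V) :
    Set.EqOn (lap (euler u)) (fun y => euler (lap u) y + 2 * lap u y) V := fun x hx => by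
  change lap (fun y => ∑ j, y j * pd u j y) x = _
  rw [lap_sum _ hV (fun j => (smooth_coord j).contDiffOn.mul (smooth_pd hV hu j)) hx]
  simp only [euler]
  conv_rhs => rw [lap, Finset.mul_sum, ← Finset.sum_add_distrib]
  refine Finset.sum_congr rfl fun j _ => ?_
  rw [lap_mul hV (smooth_coord j).contDiffOn (smooth_pd hV hu j) hx]
  simp [lap_coord, pd_coord, lap_pd hV hu j hx]

/-- The squared norm `|y|²`, written in coordinates. -/
def sqn (y : E n) : ℝ := ∑ i, y i * y i

lemma sqn_eq (y : E n) : sqn y = ‖y‖ ^ 2 := by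
  simp only [sqn, EuclideanSpace.norm_sq_eq, Real.norm_eq_abs, sq_abs]
  exact Finset.sum_congr rfl fun i _ => by ring

lemma smooth_sqn : ContDiff ℝ (⊤ : ℕ∞) (sqn : E n → ℝ) :=
  ContDiff.sum fun i _ => (smooth_coord i).mul (smooth_coord i)

lemma pd_sqn (i : Fin n) : pd (sqn : E n → ℝ) i = fun y => 2 * y i := by
  funext x
  change pd (fun y : E n => ∑ j, y j * y j) i x = _
  rw [pd_sum _ isOpen_univ (fun j => ((smooth_coord j).mul (smooth_coord j)).contDiffOn) i
    (Set.mem_univ x)]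
  have (j : Fin n) := pd_mul isOpen_univ (smooth_coord j).contDiffOn (smooth_coord j).contDiffOn i
    (Set.mem_univ x)
  simp [this, pd_coord, Finset.sum_add_distrib]
  ring

lemma lap_sqn : lap (sqn : E n → ℝ) = fun _ => 2 * (n : ℝ) := by
  funext x
  have (i : Fin n) := pd_mul isOpen_univ (contDiffOn_const (c := (2 : ℝ)))
    (smooth_coord i).contDiffOn i (Set.mem_univ x)
  simp [lap, pd_sqn, this, pd_const, pd_coord]
  ring

lemma euler_sqn : euler (sqn : E n → ℝ) = fun y => 2 * sqn y := by
  funext x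
  simp only [euler, pd_sqn, sqn, Finset.mul_sum]
  exact Finset.sum_congr rfl fun i _ => by ring

lemma lap_sqn_mul (hV : IsOpen V) (hu : ContDiffOn ℝ (⊤ : ℕ∞) u V) :
    Set.EqOn (lap (fun y => sqn y * u y))
      (fun y => sqn y * lap u y + 4 * euler u y + 2 * n * u y) V := fun x hx => by
  rw [lap_mul hV smooth_sqn.contDiffOn hu hx]
  simp only [lap_sqn, pd_sqn, euler, mul_assoc, ← Finset.mul_sum]
  ring

lemma euler_sqn_mul (hV : IsOpen V) (hu : ContDiffOn ℝ (⊤ : ℕ∞) u V) :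
    Set.EqOn (euler (fun y => sqn y * u y))
      (fun y => sqn y * euler u y + 2 * sqn y * u y) V := fun x hx => by
  rw [euler_mul hV smooth_sqn.contDiffOn hu hx, euler_sqn]
  ring

/-- The operator `L u = s² Δu - 2 (n - 2) s R u`, `s = |y|²`, which is the Laplacian conjugated by
the inversion. -/
def invOp (u : E n → ℝ) : E n → ℝ :=
  fun y => sqn y * (sqn y * lap u y) + (-(2 * ((n : ℝ) - 2))) * (sqn y * euler u y)

lemma smooth_invOp (hV : IsOpen V) (hu : ContDiffOn ℝ (⊤ : ℕ∞) u V) :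
    ContDiffOn ℝ (⊤ : ℕ∞) (invOp u) V :=
  (smooth_sqn.contDiffOn.mul (smooth_sqn.contDiffOn.mul (smooth_lap hV hu))).add
    (contDiffOn_const.mul (smooth_sqn.contDiffOn.mul (smooth_euler hV hu)))

/-- The square of the conjugated Laplacian: every term other than `s⁴ Δ²u` carries the factor
`n - 4`. -/
lemma invOp_invOp (hV : IsOpen V) (hu : ContDiffOn ℝ (⊤ : ℕ∞) u V) :
    Set.EqOn (invOp (invOp u))
      (fun y => sqn y ^ 4 * lap (lap u) y - 4 * ((n : ℝ) - 4) *
        (sqn y ^ 3 * euler (lap u) y + 2 * sqn y ^ 3 * lap u y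
          - (n - 2) * sqn y ^ 2 * (euler (euler u) y + euler u y))) V := fun x hx => by
  have hs : ContDiffOn ℝ (⊤ : ℕ∞) (sqn : E n → ℝ) V := smooth_sqn.contDiffOn
  have hl := smooth_lap hV hu
  have he := smooth_euler hV hu
  have h1 := hs.mul hl
  have h2 := hs.mul h1
  have h3 := hs.mul he
  have h4 : ContDiffOn ℝ (⊤ : ℕ∞) (fun y => (-(2 * ((n : ℝ) - 2))) * (sqn y * euler u y)) V :=
    contDiffOn_const.mul h3
  have hL : lap (invOp u) x = _ := lap_add hV h2 h4 hx
  have hE : euler (invOp u) x = _ := euler_add hV h2 h4 hx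
  simp only [lap_const_mul hV h3 _ hx, lap_sqn_mul hV h1 hx, lap_sqn_mul hV hl hx, euler_sqn_mul hV hl hx,
    lap_sqn_mul hV he hx, lap_euler hV hu hx] at hL
  simp only [euler_const_mul hV h3 _ hx, euler_sqn_mul hV h1 hx, euler_sqn_mul hV hl hx,
    euler_sqn_mul hV he hx] at hE
  rw [invOp, hL, hE]
  ring

end Calculus

/-! ### The chain rule for the Laplacian -/

section Chain

lemma pd_comp {m n : ℕ} {V : Set (E n)} {W : Set (E m)} {u : E n → ℝ} {φ : E m → E n}
    (hV : IsOpen V) (hW : IsOpen W) (hu : ContDiffOn ℝ (⊤ : ℕ∞) u V)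
    (hφ : ContDiffOn ℝ (⊤ : ℕ∞) φ W) (hm : Set.MapsTo φ W V) (i : Fin m) :
    Set.EqOn (pd (fun z => u (φ z)) i)
      (fun z => ∑ j, pd u j (φ z) * pd (fun z => φ z j) i z) W := fun x hx => by
  have hd : DifferentiableAt ℝ φ x :=
    (hφ.contDiffAt (hW.mem_nhds hx)).differentiableAt (by simp)
  have hc : fderiv ℝ (fun z => u (φ z)) x = (fderiv ℝ u (φ x)).comp (fderiv ℝ φ x) :=
    fderiv_comp x (smooth_diff hV hu (hm hx)) hd
  have hj (j : Fin n) : fderiv ℝ (fun z => φ z j) x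
      = (EuclideanSpace.proj (𝕜 := ℝ) j).comp (fderiv ℝ φ x) :=
    ((EuclideanSpace.proj (𝕜 := ℝ) j).hasFDerivAt.comp x hd.hasFDerivAt).fderiv
  have h1 : pd (fun z => u (φ z)) i x
      = fderiv ℝ u (φ x) (fderiv ℝ φ x (EuclideanSpace.single i 1)) := by
    rw [pd, hc]; rfl
  rw [h1, fderiv_eq_sum_pd]
  refine Finset.sum_congr rfl fun j _ => ?_
  have h2 : pd (fun z => φ z j) i x = fderiv ℝ φ x (EuclideanSpace.single i 1) j := by
    simp only [pd, hj]; rfl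
  rw [h2]

lemma lap_comp {m n : ℕ} {V : Set (E n)} {W : Set (E m)} {u : E n → ℝ} {φ : E m → E n}
    (hV : IsOpen V) (hW : IsOpen W) (hu : ContDiffOn ℝ (⊤ : ℕ∞) u V)
    (hφ : ContDiffOn ℝ (⊤ : ℕ∞) φ W) (hm : Set.MapsTo φ W V) :
    Set.EqOn (lap (fun z => u (φ z)))
      (fun z => ∑ j, ((∑ k, pd (pd u j) k (φ z) *
          ∑ i, pd (fun z => φ z k) i z * pd (fun z => φ z j) i z)
        + pd u j (φ z) * lap (fun z => φ z j) z)) W := fun x hx => by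
  have hc (j : Fin n) : ContDiffOn ℝ (⊤ : ℕ∞) (fun z => φ z j) W :=
    (smooth_coord j).comp_contDiffOn hφ
  have hp (j : Fin n) : ContDiffOn ℝ (⊤ : ℕ∞) (fun z => pd u j (φ z)) W :=
    (smooth_pd hV hu j).comp hφ hm
  have hi (i : Fin m) : pd (pd (fun z => u (φ z)) i) i x
      = ∑ j, ((∑ k, pd (pd u j) k (φ x) * pd (fun z => φ z k) i x) * pd (fun z => φ z j) i x
        + pd u j (φ x) * pd (pd (fun z => φ z j) i) i x) := by
    rw [pd_congr hW (pd_comp hV hW hu hφ hm i) i hx,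
      pd_sum _ hW (fun j => (hp j).mul (smooth_pd hW (hc j) i)) i hx]
    refine Finset.sum_congr rfl fun j _ => ?_
    rw [pd_mul hW (hp j) (smooth_pd hW (hc j) i) i hx]
    simp only []
    rw [pd_comp hV hW (smooth_pd hV hu j) hφ hm i hx]
  rw [lap, Finset.sum_congr rfl fun i _ => hi i, Finset.sum_comm]
  refine Finset.sum_congr rfl fun j _ => ?_
  rw [Finset.sum_add_distrib]
  congr 1
  · simp only [Finset.sum_mul, Finset.mul_sum]
    rw [Finset.sum_comm]
    exact Finset.sum_congr rfl fun k _ => Finset.sum_congr rfl fun i _ => by ring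
  · rw [lap, Finset.mul_sum]

end Chain

/-! ### The inversion -/

section Inversion

variable {n : ℕ}

/-- The inversion `x ↦ x / |x|²` in the unit sphere, with the value `0` at the origin. -/
def inversion (x : E n) : E n := (‖x‖ ^ 2)⁻¹ • x

/-- The function `x ↦ |x|⁻²` (zero at the origin). -/
def isq (x : E n) : ℝ := (sqn x)⁻¹

lemma inversion_apply (j : Fin n) :
    (fun z : E n => inversion z j) = fun z => isq z * z j := by
  funext z; simp [inversion, isq, sqn_eq]

lemma isOpen_punctured : IsOpen {x : E n | x ≠ 0} := isOpen_compl_singleton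

lemma sqn_ne {x : E n} (hx : x ∈ {x : E n | x ≠ 0}) : sqn x ≠ 0 := by
  rw [sqn_eq]; exact pow_ne_zero _ (norm_ne_zero_iff.2 hx)

lemma smooth_isq : ContDiffOn ℝ (⊤ : ℕ∞) (isq : E n → ℝ) {x | x ≠ 0} :=
  smooth_sqn.contDiffOn.inv fun _ hx => sqn_ne hx

lemma smooth_inversion : ContDiffOn ℝ (⊤ : ℕ∞) (inversion : E n → E n) {x | x ≠ 0} := by
  have : (inversion : E n → E n) = fun z => isq z • z := by
    funext z; simp [inversion, isq, sqn_eq]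
  rw [this]
  exact smooth_isq.smul contDiffOn_id

lemma pd_isq (i : Fin n) :
    Set.EqOn (pd (isq : E n → ℝ) i) (fun y => -2 * (y i * (isq y * isq y))) {x | x ≠ 0} :=
  fun x hx => by
  -- differentiate `|x|⁻² |x|² = 1`
  have h1 : Set.EqOn (fun y : E n => isq y * sqn y) (fun _ => 1) {x | x ≠ 0} :=
    fun y hy => inv_mul_cancel₀ (sqn_ne hy)
  have h2 := pd_congr isOpen_punctured h1 i hx
  rw [pd_mul isOpen_punctured smooth_isq smooth_sqn.contDiffOn i hx] at h2
  simp only [pd_sqn, pd_const] at h2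
  have h3 : isq x * sqn x = 1 := h1 hx
  linear_combination isq x * h2 - pd isq i x * h3

lemma lap_isq :
    Set.EqOn (lap (isq : E n → ℝ)) (fun y => (8 - 2 * n) * isq y ^ 2) {x | x ≠ 0} :=
  fun x hx => by
  have hi (i : Fin n) : pd (pd (isq : E n → ℝ) i) i x
      = -2 * isq x ^ 2 + 8 * isq x ^ 3 * (x i * x i) := by
    have hc : ContDiffOn ℝ (⊤ : ℕ∞) (fun y : E n => y i) {x | x ≠ 0} :=
      (smooth_coord i).contDiffOn
    have hw : ContDiffOn ℝ (⊤ : ℕ∞) (fun y : E n => isq y * isq y) {x | x ≠ 0} :=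
      smooth_isq.mul smooth_isq
    rw [pd_congr isOpen_punctured (pd_isq i) i hx,
      pd_mul isOpen_punctured contDiffOn_const (hc.mul hw) i hx]
    simp only []
    rw [pd_mul isOpen_punctured hc hw i hx]
    simp only []
    rw [pd_mul isOpen_punctured smooth_isq smooth_isq i hx]
    simp only [pd_isq i hx, pd_const, pd_coord, if_true]
    ring
  have h3 : isq x * sqn x = 1 := inv_mul_cancel₀ (sqn_ne hx)
  rw [lap, Finset.sum_congr rfl fun i _ => hi i, Finset.sum_add_distrib,
    ← Finset.mul_sum (a := 8 * isq x ^ 3)]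
  change _ + 8 * isq x ^ 3 * sqn x = _
  simp
  linear_combination 8 * isq x ^ 2 * h3

lemma pd_inversion (i j : Fin n) : Set.EqOn (pd (fun z : E n => inversion z j) i)
    (fun y => (if j = i then isq y else 0) - 2 * isq y ^ 2 * (y i * y j)) {x | x ≠ 0} :=
  fun x hx => by
  rw [inversion_apply, pd_mul isOpen_punctured smooth_isq (smooth_coord j).contDiffOn i hx]
  simp only [pd_isq i hx, pd_coord]
  split_ifs <;> ring

lemma lap_inversion (j : Fin n) : Set.EqOn (lap (fun z : E n => inversion z j))
    (fun y => -(2 * ((n : ℝ) - 2)) * isq y * inversion y j) {x | x ≠ 0} := fun x hx => by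
  have hj := congrFun (inversion_apply j) x
  simp only [] at hj
  simp only [hj]
  rw [inversion_apply, lap_mul isOpen_punctured smooth_isq (smooth_coord j).contDiffOn hx]
  simp only [lap_isq hx, lap_coord, pd_coord, pd_isq _ hx]
  simp
  ring

/-- The inversion is conformal with factor `|x|⁻²`. -/
lemma conformal_inversion (j k : Fin n) {x : E n} (hx : x ∈ {x : E n | x ≠ 0}) :
    ∑ i, pd (fun z : E n => inversion z k) i x * pd (fun z : E n => inversion z j) i x
      = if k = j then isq x ^ 2 else 0 := by
  have h3 : isq x * sqn x = 1 := inv_mul_cancel₀ (sqn_ne hx)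
  have hi (i : Fin n) : pd (fun z : E n => inversion z k) i x * pd (fun z : E n => inversion z j) i x
      = (if k = i then (if j = i then isq x ^ 2 else 0) - 2 * isq x ^ 3 * (x i * x j) else 0)
        + (if j = i then - 2 * isq x ^ 3 * (x i * x k) else 0)
        + 4 * isq x ^ 4 * (x j * x k) * (x i * x i) := by
    rw [pd_inversion i k hx, pd_inversion i j hx]
    simp only []
    split_ifs <;> ring
  rw [Finset.sum_congr rfl fun i _ => hi i, Finset.sum_add_distrib, Finset.sum_add_distrib,
    ← Finset.mul_sum]
  change _ + 4 * isq x ^ 4 * (x j * x k) * sqn x = _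
  simp only [Finset.sum_ite_eq, Finset.mem_univ, if_true, eq_comm (a := j) (b := k)]
  linear_combination 4 * isq x ^ 3 * (x j * x k) * h3

lemma sqn_inversion {x : E n} (hx : x ∈ {x : E n | x ≠ 0}) : sqn (inversion x) = isq x := by
  have h3 : isq x * sqn x = 1 := inv_mul_cancel₀ (sqn_ne hx)
  have h (i : Fin n) : inversion x i * inversion x i = isq x ^ 2 * (x i * x i) := by
    rw [show inversion x i = isq x * x i from congrFun (inversion_apply i) x]; ring
  rw [sqn, Finset.sum_congr rfl fun i _ => h i, ← Finset.mul_sum]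
  change isq x ^ 2 * sqn x = _
  linear_combination isq x * h3

variable {V : Set (E n)} {u : E n → ℝ}

lemma isOpen_dom (hV : IsOpen V) : IsOpen ({x : E n | x ≠ 0} ∩ inversion ⁻¹' V) :=
  smooth_inversion.continuousOn.isOpen_inter_preimage isOpen_punctured hV

/-- `Δ(u ∘ φ) = (L u) ∘ φ` for the inversion `φ`. -/
lemma lap_comp_inv (hV : IsOpen V) (hu : ContDiffOn ℝ (⊤ : ℕ∞) u V) :
    Set.EqOn (lap (fun z => u (inversion z))) (fun z => invOp u (inversion z))
      ({x : E n | x ≠ 0} ∩ inversion ⁻¹' V) := fun x hx => by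
  rw [lap_comp hV (isOpen_dom hV) hu (smooth_inversion.mono Set.inter_subset_left)
    (fun y hy => hy.2) hx]
  simp only [conformal_inversion _ _ hx.1, lap_inversion _ hx.1, invOp, sqn_inversion hx.1]
  simp only [Finset.sum_add_distrib, lap, euler, mul_ite, mul_zero, Finset.sum_ite_eq', Finset.mem_univ,
    if_true, Finset.mul_sum]
  congr 1 <;> exact Finset.sum_congr rfl fun i _ => by ring

lemma bilap_comp_inv (hV : IsOpen V) (hu : ContDiffOn ℝ (⊤ : ℕ∞) u V) :
    Set.EqOn (lap (lap (fun z => u (inversion z)))) (fun z => invOp (invOp u) (inversion z))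
      ({x : E n | x ≠ 0} ∩ inversion ⁻¹' V) := fun x hx => by
  rw [lap_congr (isOpen_dom hV) (lap_comp_inv hV hu) hx,
    lap_comp_inv hV (smooth_invOp hV hu) hx]

end Inversion

/-- The inversion in the unit sphere `x ↦ x/|x|²` on `ℝⁿ∖{0}` is a biharmonic morphism
if and only if `n = 4`. -/
theorem inversion_isBiharmonicMorphism_iff (n : ℕ) (hn : 2 ≤ n) :
    IsBiharmonicMorphism {x : E n | x ≠ 0}
      (fun x : E n => (‖x‖ ^ 2)⁻¹ • x) ↔ n = 4 := by
  constructor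
  · intro h
    let k : Fin n := ⟨0, by omega⟩
    -- the test function `|y|² + y₁`, evaluated at the first unit vector
    have hs : ContDiffOn ℝ (⊤ : ℕ∞) (sqn : E n → ℝ) Set.univ := smooth_sqn.contDiffOn
    have hc : ContDiffOn ℝ (⊤ : ℕ∞) (fun y : E n => y k) Set.univ := (smooth_coord k).contDiffOn
    have hu : ContDiffOn ℝ (⊤ : ℕ∞) (fun y : E n => sqn y + y k) Set.univ := hs.add hc
    have hlap : lap (fun y : E n => sqn y + y k) = fun _ => 2 * (n : ℝ) := by
      funext y
      rw [lap_add isOpen_univ hs hc (Set.mem_univ y)]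
      simp [lap_sqn, lap_coord]
    have heul : euler (fun y : E n => sqn y + y k) = fun y => 2 * sqn y + y k := by
      funext y
      rw [euler_add isOpen_univ hs hc (Set.mem_univ y)]
      simp [euler_sqn, euler_coord]
    have heul2 : euler (fun y : E n => 2 * sqn y + y k) = fun y => 4 * sqn y + y k := by
      funext y
      rw [euler_add isOpen_univ (contDiffOn_const.mul hs) hc (Set.mem_univ y)]
      simp only [euler_const_mul isOpen_univ hs 2 (Set.mem_univ y), euler_sqn, euler_coord]
      ring
    let e : E n := EuclideanSpace.single k 1
    have he0 : e ≠ 0 := by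
      intro h0
      have := congrArg (fun y : E n => y k) h0
      simp [e] at this
    have hφe : inversion e = e := by simp [inversion, e]
    have hsq : sqn e = 1 := by simp [sqn_eq, e]
    have hek : e k = 1 := by simp [e]
    have h0 : lap (lap (fun z => (fun y : E n => sqn y + y k) (inversion z))) e = 0 :=
      h Set.univ isOpen_univ _ hu (fun y _ => by rw [hlap, lap_const]) e ⟨he0, Set.mem_univ _⟩
    rw [bilap_comp_inv isOpen_univ hu ⟨he0, Set.mem_univ _⟩] at h0
    simp only [] at h0
    rw [invOp_invOp isOpen_univ hu (Set.mem_univ _)] at h0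
    simp only [hφe, hlap, heul, heul2, lap_const, euler_const, hsq, hek] at h0
    have h4 : ((n : ℝ) - 4) ^ 2 = 0 := by linear_combination h0 / 16
    have h5 : (n : ℝ) = 4 := sub_eq_zero.1 (pow_eq_zero_iff two_ne_zero |>.1 h4)
    exact_mod_cast h5
  · rintro rfl V hV f hf hb x hx
    change lap (lap (fun z => f (inversion z))) x = 0
    have hx' : x ∈ {x : E 4 | x ≠ 0} ∩ inversion ⁻¹' V := hx
    rw [bilap_comp_inv hV hf hx']
    simp only []
    rw [invOp_invOp hV hf hx'.2]
    simp [hb _ hx'.2]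

end
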